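/- Let α, β, λ, σ > 0 and ρ₁ < ρ₂ be real numbers. Set n₁ := (β·ρ₁ + α·ρ₂)/(α+β), γ := αβ(ρ₁ − ρ₂)²/(α+β)², h_∞ := n₁²/λ − n₁σ²/(2λ) + γ/(λ+α+β), i_∞ := γ/(λ(λ+α+β)) + σ²/(2λ) + (n₁/λ − σ²/(2λ))², and j_∞ := n₁/λ − σ²/(2λ). Define 𝔤(x,y) := h_∞·x + n₁·y − (σ²/2)·(i_∞·x² + 2j_∞·x·y + y²). Then 𝔤 attains its unique global maximum at (c_∞, d_∞), where c_∞ = 2λγ/(2γσ² + σ⁴(λ+α+β)) and d_∞ = (γ + n₁(λ+α+β))/(2γ + σ²(λ+α+β)); moreover 𝔤(c_∞, d_∞) > 0. -/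

import Mathlib

/-!
The growth rate is `h x + m y - s / 2 * Q (x, y)`, where `Q (x, y) = i x² + 2 j x y + y²` is the
stationary second moment of `x Z + y`. Since `i - j²` is the variance of `Z`, it is positive and
`Q` is positive definite. Hence a point solving the first-order conditions is the unique maximizer,
the deficit at any other point being `s / 2` times `Q` of the displacement. As the strategy `(0, 0)`
has growth rate `0`, uniqueness makes the maximum positive unless the maximizer is `(0, 0)` itself.
The drift enters only through its mean, its variance and the relaxation rate `κ = λ + α + β`.
-/

variable {𝕜 : Type*} [Field 𝕜]

/-- The quadratic form `E[(u Z + w)²]` of a random variable `Z` with first moment `j` and second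
moment `i`. -/
def affineSecondMoment (i j u w : 𝕜) : 𝕜 :=
  i * u ^ 2 + 2 * j * u * w + w ^ 2

lemma affineSecondMoment_eq_add_sq (i j u w : 𝕜) :
    affineSecondMoment i j u w = (i - j ^ 2) * u ^ 2 + (j * u + w) ^ 2 := by
  unfold affineSecondMoment
  ring

/-- The growth rate of the affine strategy `z ↦ x z + y`, where `s` is the squared volatility of the
stock, `m` the mean drift, `h` the mixed moment of drift and signal, and `j`, `i` are the first two
moments of the signal. -/
def affineGrowthRate (s h m i j x y : 𝕜) : 𝕜 :=
  h * x + m * y - s / 2 * affineSecondMoment i j x y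

lemma affineGrowthRate_zero_zero (s h m i j : 𝕜) : affineGrowthRate s h m i j 0 0 = 0 := by
  simp [affineGrowthRate, affineSecondMoment]

/-- Stationary mean of the signal, the exponential moving average with parameter `lam` of the
log-returns of a stock with mean drift `m` and volatility `σ`. This is `j_∞`. -/
def signalMean (m σ lam : 𝕜) : 𝕜 :=
  m / lam - σ ^ 2 / (2 * lam)

/-- Stationary second moment of the signal, for a drift of variance `γ`. This is `i_∞`; in all the
definitions below, `κ` stands for `λ + α + β`. -/
def signalSecondMoment (m γ σ lam κ : 𝕜) : 𝕜 :=
  γ / (lam * κ) + σ ^ 2 / (2 * lam) + signalMean m σ lam ^ 2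

/-- Stationary mean of the product of drift and signal. This is `h_∞`. -/
def driftSignalMoment (m γ σ lam κ : 𝕜) : 𝕜 :=
  m ^ 2 / lam - m * σ ^ 2 / (2 * lam) + γ / κ

/-- Slope `c_∞` of the growth-optimal affine strategy. -/
def optimalSlope (γ σ lam κ : 𝕜) : 𝕜 :=
  2 * lam * γ / (2 * γ * σ ^ 2 + σ ^ 4 * κ)

lemma optimalSlope_eq (γ σ lam κ : 𝕜) :
    optimalSlope γ σ lam κ = 2 * lam * γ / (σ ^ 2 * (2 * γ + σ ^ 2 * κ)) := by
  unfold optimalSlope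
  congr 1
  ring

/-- Intercept `d_∞` of the growth-optimal affine strategy. -/
def optimalIntercept (m γ σ κ : 𝕜) : 𝕜 :=
  (γ + m * κ) / (2 * γ + σ ^ 2 * κ)

variable [LinearOrder 𝕜] [IsStrictOrderedRing 𝕜]

section QuadraticMaximum

variable {s h m i j c d : 𝕜}

lemma affineSecondMoment_nonneg (hij : j ^ 2 ≤ i) (u w : 𝕜) : 0 ≤ affineSecondMoment i j u w := by
  rw [affineSecondMoment_eq_add_sq]
  exact add_nonneg (mul_nonneg (sub_nonneg.mpr hij) (sq_nonneg u)) (sq_nonneg _)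

lemma affineSecondMoment_eq_zero_iff (hij : j ^ 2 < i) {u w : 𝕜} :
    affineSecondMoment i j u w = 0 ↔ u = 0 ∧ w = 0 := by
  have variance_pos : 0 < i - j ^ 2 := sub_pos.mpr hij
  rw [affineSecondMoment_eq_add_sq, add_eq_zero_iff_of_nonneg (by positivity) (by positivity),
    mul_eq_zero_iff_left variance_pos.ne', sq_eq_zero_iff, sq_eq_zero_iff]
  exact and_congr_right fun hu => by rw [hu, mul_zero, zero_add]

lemma affineGrowthRate_eq_sub (hslope : h = s * (i * c + j * d)) (hintercept : m = s * (j * c + d))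
    (x y : 𝕜) :
    affineGrowthRate s h m i j x y =
      affineGrowthRate s h m i j c d - s / 2 * affineSecondMoment i j (x - c) (y - d) := by
  unfold affineGrowthRate affineSecondMoment
  rw [hslope, hintercept]
  ring

lemma affineGrowthRate_le (hs : 0 ≤ s) (hij : j ^ 2 ≤ i) (hslope : h = s * (i * c + j * d))
    (hintercept : m = s * (j * c + d)) (x y : 𝕜) :
    affineGrowthRate s h m i j x y ≤ affineGrowthRate s h m i j c d := by
  rw [affineGrowthRate_eq_sub hslope hintercept x y]
  exact sub_le_self _ (mul_nonneg (by positivity) (affineSecondMoment_nonneg hij _ _))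

lemma affineGrowthRate_eq_iff (hs : s ≠ 0) (hij : j ^ 2 < i) (hslope : h = s * (i * c + j * d))
    (hintercept : m = s * (j * c + d)) (x y : 𝕜) :
    affineGrowthRate s h m i j x y = affineGrowthRate s h m i j c d ↔ (x, y) = (c, d) := by
  rw [affineGrowthRate_eq_sub hslope hintercept x y, sub_eq_self,
    mul_eq_zero_iff_left (div_ne_zero hs two_ne_zero), affineSecondMoment_eq_zero_iff hij,
    sub_eq_zero, sub_eq_zero, Prod.mk_inj]

lemma affineGrowthRate_pos_iff (hs : 0 < s) (hij : j ^ 2 < i) (hslope : h = s * (i * c + j * d))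
    (hintercept : m = s * (j * c + d)) :
    0 < affineGrowthRate s h m i j c d ↔ (c, d) ≠ (0, 0) :=
  calc 0 < affineGrowthRate s h m i j c d
    _ ↔ affineGrowthRate s h m i j 0 0 < affineGrowthRate s h m i j c d := by
      rw [affineGrowthRate_zero_zero]
    _ ↔ affineGrowthRate s h m i j 0 0 ≠ affineGrowthRate s h m i j c d :=
      (affineGrowthRate_le hs.le hij.le hslope hintercept 0 0).lt_iff_ne
    _ ↔ (c, d) ≠ (0, 0) :=
      (affineGrowthRate_eq_iff hs.ne' hij hslope hintercept 0 0).not.trans ne_comm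

end QuadraticMaximum

section StationarySignal

variable {m γ σ lam κ : 𝕜}

lemma signalMean_sq_lt_signalSecondMoment (hγ : 0 ≤ γ) (hσ : σ ≠ 0) (hlam : 0 < lam)
    (hκ : 0 < κ) : signalMean m σ lam ^ 2 < signalSecondMoment m γ σ lam κ :=
  lt_add_of_pos_left _ (by positivity)

lemma optimal_intercept_condition (hσ : σ ≠ 0) (hlam : lam ≠ 0)
    (hdenom : 2 * γ + σ ^ 2 * κ ≠ 0) :
    m = σ ^ 2 * (signalMean m σ lam * optimalSlope γ σ lam κ + optimalIntercept m γ σ κ) := by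
  rw [optimalSlope_eq, signalMean, optimalIntercept]
  field_simp
  ring

/-- Subtracting `signalMean` times the intercept condition leaves
`cov (drift, signal) = σ² * var signal * slope`. -/
lemma optimal_slope_condition (hσ : σ ≠ 0) (hlam : lam ≠ 0) (hκ : κ ≠ 0)
    (hdenom : 2 * γ + σ ^ 2 * κ ≠ 0) :
    driftSignalMoment m γ σ lam κ =
      σ ^ 2 * (signalSecondMoment m γ σ lam κ * optimalSlope γ σ lam κ
        + signalMean m σ lam * optimalIntercept m γ σ κ) := by
  have variance_eq : γ / (lam * κ) + σ ^ 2 / (2 * lam) = (2 * γ + σ ^ 2 * κ) / (2 * lam * κ) := by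
    field_simp
  have covariance_eq : γ / κ =
      σ ^ 2 * ((γ / (lam * κ) + σ ^ 2 / (2 * lam)) * optimalSlope γ σ lam κ) := by
    rw [variance_eq, optimalSlope_eq]
    generalize 2 * γ + σ ^ 2 * κ = denom at hdenom ⊢
    field_simp
  have moment_eq : driftSignalMoment m γ σ lam κ = m * signalMean m σ lam + γ / κ := by
    unfold driftSignalMoment signalMean
    ring
  have intercept_condition := optimal_intercept_condition (m := m) hσ hlam hdenom
  rw [moment_eq, signalSecondMoment]
  linear_combination covariance_eq + signalMean m σ lam * intercept_condition

lemma optimalSlope_optimalIntercept_eq_zero_iff (hσ : σ ≠ 0) (hlam : lam ≠ 0) (hκ : κ ≠ 0)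
    (hdenom : 2 * γ + σ ^ 2 * κ ≠ 0) :
    (optimalSlope γ σ lam κ, optimalIntercept m γ σ κ) = (0, 0) ↔ γ = 0 ∧ m = 0 := by
  have slope_eq_zero_iff : optimalSlope γ σ lam κ = 0 ↔ γ = 0 := by
    simp [optimalSlope_eq, hσ, hlam, hdenom]
  have intercept_eq_zero_iff : optimalIntercept m γ σ κ = 0 ↔ γ + m * κ = 0 := by
    simp [optimalIntercept, hdenom]
  rw [Prod.mk_inj, slope_eq_zero_iff, intercept_eq_zero_iff]
  exact and_congr_right fun hγ => by rw [hγ, zero_add, mul_eq_zero_iff_right hκ]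

end StationarySignal

lemma twoState_variance_pos {α β ρ₁ ρ₂ : 𝕜} (hα : 0 < α) (hβ : 0 < β) (hρ : ρ₁ ≠ ρ₂) :
    0 < α * β * (ρ₁ - ρ₂) ^ 2 / (α + β) ^ 2 :=
  div_pos (mul_pos (mul_pos hα hβ) (sq_pos_of_ne_zero (sub_ne_zero.mpr hρ))) (by positivity)

theorem ctmc_affine_growth_quadratic_max_general (m : 𝕜) {γ σ lam κ : 𝕜} (hγ : 0 ≤ γ)
    (hσ : σ ≠ 0) (hlam : 0 < lam) (hκ : 0 < κ) {g : 𝕜 → 𝕜 → 𝕜}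
    (hg : g = affineGrowthRate (σ ^ 2) (driftSignalMoment m γ σ lam κ) m
      (signalSecondMoment m γ σ lam κ) (signalMean m σ lam))
    {c d : 𝕜} (hc : c = optimalSlope γ σ lam κ) (hd : d = optimalIntercept m γ σ κ) :
    (∀ x y : 𝕜, g x y ≤ g c d ∧ (g x y = g c d ↔ (x, y) = (c, d)))
    ∧ (0 < g c d ↔ γ ≠ 0 ∨ m ≠ 0) := by
  subst hg hc hd
  have hs : 0 < σ ^ 2 := by positivity
  have variance_pos := signalMean_sq_lt_signalSecondMoment (m := m) hγ hσ hlam hκ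
  have hdenom : 2 * γ + σ ^ 2 * κ ≠ 0 := by positivity
  have hslope := optimal_slope_condition (m := m) hσ hlam.ne' hκ.ne' hdenom
  have hintercept := optimal_intercept_condition (m := m) hσ hlam.ne' hdenom
  refine ⟨fun x y => ⟨affineGrowthRate_le hs.le variance_pos.le hslope hintercept x y,
    affineGrowthRate_eq_iff hs.ne' variance_pos hslope hintercept x y⟩, ?_⟩
  rw [affineGrowthRate_pos_iff hs variance_pos hslope hintercept, ne_eq,
    optimalSlope_optimalIntercept_eq_zero_iff hσ hlam.ne' hκ.ne' hdenom, not_and_or]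

/-- For a two-state CTMC drift, the long-run quadratic objective `𝔤` attains its
unique global maximum at `(c_∞, d_∞)`, and the maximal value is strictly positive. -/
theorem ctmc_affine_growth_quadratic_max
    (α β lam σ ρ₁ ρ₂ : ℝ) (hα : 0 < α) (hβ : 0 < β) (hlam : 0 < lam) (hσ : 0 < σ)
    (hρ : ρ₁ < ρ₂)
    (n₁ γ hInf iInf jInf cInf dInf : ℝ)
    (hn₁ : n₁ = (β * ρ₁ + α * ρ₂) / (α + β))
    (hγ : γ = α * β * (ρ₁ - ρ₂) ^ 2 / (α + β) ^ 2)
    (hh : hInf = n₁ ^ 2 / lam - n₁ * σ ^ 2 / (2 * lam) + γ / (lam + α + β))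
    (hi : iInf = γ / (lam * (lam + α + β)) + σ ^ 2 / (2 * lam)
        + (n₁ / lam - σ ^ 2 / (2 * lam)) ^ 2)
    (hj : jInf = n₁ / lam - σ ^ 2 / (2 * lam))
    (𝔤 : ℝ → ℝ → ℝ)
    (h𝔤 : ∀ x y, 𝔤 x y = hInf * x + n₁ * y
        - σ ^ 2 / 2 * (iInf * x ^ 2 + 2 * jInf * x * y + y ^ 2))
    (hc : cInf = 2 * lam * γ / (2 * γ * σ ^ 2 + σ ^ 4 * (lam + α + β)))
    (hd : dInf = (γ + n₁ * (lam + α + β)) / (2 * γ + σ ^ 2 * (lam + α + β))) :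
    (∀ x y : ℝ, 𝔤 x y ≤ 𝔤 cInf dInf ∧ (𝔤 x y = 𝔤 cInf dInf ↔ (x, y) = (cInf, dInf)))
    ∧ 0 < 𝔤 cInf dInf := by
  have γ_pos : 0 < γ := hγ ▸ twoState_variance_pos hα hβ hρ.ne
  subst hh hi hj
  have maximum := ctmc_affine_growth_quadratic_max_general n₁ γ_pos.le hσ.ne' hlam
    (by positivity : 0 < lam + α + β) (funext₂ h𝔤) hc hd
  exact ⟨maximum.1, maximum.2.mpr (Or.inl γ_pos.ne')⟩
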